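/- arXiv:1804.07951 — 2 statements merged into one kernel-verified Lean document; each statement's English description precedes it below -/
import Mathlib

section
/- Let m, c, k, h0, ch, vd, ω be positive reals with ω² > 2k/m − k·h0·(2·(c + k·ch·vd) + k·h0)/m², set s = iω, and let z₁, z₂ : ℝ → ℂ. Assume: z₁ and z₂ are twice differentiable with continuous first and second derivatives on [0,∞); z₁, z₁', z₂, z₂', z₂'' are all of exponential order a for some real a with a < 0; z₁(0) = 0, z₂(0) = 0 and z₂'(0) = 0; the differential equation z₂''(t) + ((c + k·h0 + k·ch·vd)/m)·z₂'(t) + (k/m)·z₂(t) = ((c + k·ch·vd)/m)·z₁'(t) + (k/m)·z₁(t) holds for all t ≥ 0; and L[z₁](s) ≠ 0. Then ‖L[z₂](s) / L[z₁](s)‖ < 1, i.e., the platoon with autonomous unidirectional variable-time-headway controller is stable at frequency ω. -/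
open MeasureTheory

/-- The Laplace transform of `f : ℝ → ℂ` at `s : ℂ`:  `∫ t in (0,∞), e^{-s t} f t`. -/
noncomputable def laplace (f : ℝ → ℂ) (s : ℂ) : ℂ :=
  ∫ t in Set.Ioi (0 : ℝ), Complex.exp (-(s * t)) * f t

/-- `f` is of exponential order `a`: there is `M > 0` with `‖f t‖ ≤ M e^{a t}` for `t ≥ 0`. -/
def ExpOrder (f : ℝ → ℂ) (a : ℝ) : Prop :=
  ∃ M > 0, ∀ t ≥ (0 : ℝ), ‖f t‖ ≤ M * Real.exp (a * t)

lemma lap_norm_exp (ω t : ℝ) : ‖Complex.exp (-(Complex.I * (ω : ℂ) * t))‖ = 1 := by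
  rw [Complex.norm_exp]
  simp

lemma lap_int (ω a : ℝ) (ha : a < 0) (f : ℝ → ℂ) (hf : ContinuousOn f (Set.Ici 0))
    (he : ExpOrder f a) :
    IntegrableOn (fun t : ℝ => Complex.exp (-(Complex.I * (ω : ℂ) * t)) * f t) (Set.Ioi 0) := by
  obtain ⟨M, hM, h⟩ := he
  have h1 : IntegrableOn (fun t : ℝ => M * Real.exp (a * t)) (Set.Ioi 0) :=
    (integrableOn_exp_mul_Ioi ha 0).const_mul M
  refine Integrable.mono' h1 ?_ ?_
  · apply ContinuousOn.aestronglyMeasurable _ measurableSet_Ioi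
    apply ContinuousOn.mul
    · apply Continuous.continuousOn
      fun_prop
    · exact hf.mono Set.Ioi_subset_Ici_self
  · refine (ae_restrict_mem measurableSet_Ioi).mono fun t ht => ?_
    rw [norm_mul, lap_norm_exp, one_mul]
    exact h t (le_of_lt ht)

lemma lap_deriv (ω a : ℝ) (ha : a < 0) (f f' : ℝ → ℂ)
    (hd : ∀ t ∈ Set.Ici (0 : ℝ), HasDerivWithinAt f (f' t) (Set.Ici 0) t)
    (hc : ContinuousOn f' (Set.Ici 0)) (he : ExpOrder f a) (he' : ExpOrder f' a) (h0 : f 0 = 0) :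
    laplace f' (Complex.I * (ω : ℂ)) = Complex.I * (ω : ℂ) * laplace f (Complex.I * (ω : ℂ)) := by
  have hcf : ContinuousOn f (Set.Ici 0) := fun t ht => (hd t ht).continuousWithinAt
  have i1 := lap_int ω a ha f hcf he
  have i2 := lap_int ω a ha f' hc he'
  have hE : Continuous fun t : ℝ => Complex.exp (-(Complex.I * (ω : ℂ) * t)) := by fun_prop
  have key := integral_Ioi_of_hasDerivAt_of_tendsto (a := (0:ℝ)) (m := (0:ℂ))
    (f := fun t : ℝ => Complex.exp (-(Complex.I * (ω : ℂ) * t)) * f t)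
    (f' := fun t : ℝ => Complex.exp (-(Complex.I * (ω : ℂ) * t)) * f' t
      - (Complex.I * (ω : ℂ)) * (Complex.exp (-(Complex.I * (ω : ℂ) * t)) * f t))
    (hE.continuousWithinAt.mul (hcf 0 (by simp))) ?_ (i2.sub (i1.const_mul _)) ?_
  · rw [integral_sub i2 (i1.const_mul _), integral_const_mul] at key
    simp only [h0, mul_zero, sub_zero] at key
    exact sub_eq_zero.mp key
  · intro t ht
    have hft : HasDerivAt f (f' t) t := (hd t (Set.Ioi_subset_Ici_self ht)).hasDerivAt (Ici_mem_nhds ht)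
    have h1 : HasDerivAt (fun t : ℝ => -(Complex.I * (ω : ℂ) * (t : ℂ)))
        (-(Complex.I * (ω : ℂ) * 1)) t :=
      ((Complex.ofRealCLM.hasDerivAt (x := t)).const_mul (Complex.I * (ω : ℂ))).neg
    refine (h1.cexp.mul hft).congr_deriv ?_
    ring
  · obtain ⟨M, hM, h⟩ := he
    have ht : Filter.Tendsto (fun t : ℝ => M * Real.exp (a * t)) Filter.atTop (nhds 0) := by
      have := (Real.tendsto_exp_atBot.comp
        (Filter.tendsto_id.const_mul_atTop_of_neg ha)).const_mul M
      simpa using this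
    refine squeeze_zero_norm' ?_ ht
    filter_upwards [Filter.eventually_ge_atTop 0] with t ht
    rw [norm_mul, lap_norm_exp, one_mul]
    exact h t ht

theorem stmt8 (m c k h0 ch vd ω : ℝ) (hm : 0 < m) (hc : 0 < c) (hk : 0 < k) (hh0 : 0 < h0) (hch : 0 < ch) (hvd : 0 < vd) (hω : 0 < ω)
    (hfreq : 2 * k / m - k * h0 * (2 * (c + k * ch * vd) + k * h0) / m ^ 2 < ω ^ 2)
    (s : ℂ) (hs : s = Complex.I * (ω : ℂ)) (a : ℝ) (ha : a < 0)
    (z₁ z₂ z₁' z₁'' z₂' z₂'' : ℝ → ℂ)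
    (hdz₁ : ∀ t ∈ Set.Ici (0 : ℝ), HasDerivWithinAt z₁ (z₁' t) (Set.Ici 0) t)
    (hdz₁' : ∀ t ∈ Set.Ici (0 : ℝ), HasDerivWithinAt z₁' (z₁'' t) (Set.Ici 0) t)
    (hdz₂ : ∀ t ∈ Set.Ici (0 : ℝ), HasDerivWithinAt z₂ (z₂' t) (Set.Ici 0) t)
    (hdz₂' : ∀ t ∈ Set.Ici (0 : ℝ), HasDerivWithinAt z₂' (z₂'' t) (Set.Ici 0) t)
    (hcz₁' : ContinuousOn z₁' (Set.Ici 0)) (hcz₁'' : ContinuousOn z₁'' (Set.Ici 0))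
    (hcz₂' : ContinuousOn z₂' (Set.Ici 0)) (hcz₂'' : ContinuousOn z₂'' (Set.Ici 0))
    (hez₁ : ExpOrder z₁ a) (hez₁' : ExpOrder z₁' a)
    (hez₂ : ExpOrder z₂ a) (hez₂' : ExpOrder z₂' a) (hez₂'' : ExpOrder z₂'' a)
    (hinit₁ : z₁ 0 = 0) (hinit₂ : z₂ 0 = 0) (hinit₂' : z₂' 0 = 0)
    (hode : ∀ t ≥ (0 : ℝ),
      z₂'' t + (((c + k * h0 + k * ch * vd) / m : ℝ) : ℂ) * z₂' t + ((k / m : ℝ) : ℂ) * z₂ t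
        = (((c + k * ch * vd) / m : ℝ) : ℂ) * z₁' t + ((k / m : ℝ) : ℂ) * z₁ t)
    (hL : laplace z₁ s ≠ 0) :
    ‖laplace z₂ s / laplace z₁ s‖ < 1 := by
  subst hs
  have hc1 : ContinuousOn z₁ (Set.Ici 0) := fun t ht => (hdz₁ t ht).continuousWithinAt
  have hc2 : ContinuousOn z₂ (Set.Ici 0) := fun t ht => (hdz₂ t ht).continuousWithinAt
  have d1 := lap_deriv ω a ha z₁ z₁' hdz₁ hcz₁' hez₁ hez₁' hinit₁
  have d2 := lap_deriv ω a ha z₂ z₂' hdz₂ hcz₂' hez₂ hez₂' hinit₂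
  have d3 := lap_deriv ω a ha z₂' z₂'' hdz₂' hcz₂'' hez₂' hez₂'' hinit₂'
  have i1 := lap_int ω a ha z₁ hc1 hez₁
  have i1' := lap_int ω a ha z₁' hcz₁' hez₁'
  have i2 := lap_int ω a ha z₂ hc2 hez₂
  have i2' := lap_int ω a ha z₂' hcz₂' hez₂'
  have i2'' := lap_int ω a ha z₂'' hcz₂'' hez₂''
  have hcond : 2 * (k / m) - (((c + k * h0 + k * ch * vd) / m) ^ 2
      - ((c + k * ch * vd) / m) ^ 2) < ω ^ 2 := by
    convert hfreq using 1
    field_simp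
    ring
  generalize (c + k * h0 + k * ch * vd) / m = A at *
  generalize (c + k * ch * vd) / m = B at *
  generalize k / m = K at *
  have hlap : laplace z₂'' (Complex.I * ω) + A * laplace z₂' (Complex.I * ω)
      + K * laplace z₂ (Complex.I * ω)
      = B * laplace z₁' (Complex.I * ω) + K * laplace z₁ (Complex.I * ω) := by
    unfold laplace
    simp only [← integral_const_mul]
    have i3 : IntegrableOn (fun t : ℝ => Complex.exp (-(Complex.I * (ω : ℂ) * t)) * z₂'' t
        + (A : ℂ) * (Complex.exp (-(Complex.I * (ω : ℂ) * t)) * z₂' t)) (Set.Ioi 0) :=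
      i2''.add (i2'.const_mul _)
    rw [← integral_add i2'' (i2'.const_mul _),
      ← integral_add i3 (i2.const_mul _),
      ← integral_add (i1'.const_mul _) (i1.const_mul _)]
    refine setIntegral_congr_fun measurableSet_Ioi fun t ht => ?_
    have := hode t (le_of_lt ht)
    linear_combination Complex.exp (-(Complex.I * ω * t)) * this
  rw [d3, d2, d1] at hlap
  generalize laplace z₁ (Complex.I * ω) = Z1 at *
  generalize laplace z₂ (Complex.I * ω) = Z2 at *
  have h2 : (((K - ω ^ 2 : ℝ) : ℂ) + ((A * ω : ℝ) : ℂ) * Complex.I) * Z2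
      = ((K : ℂ) + ((B * ω : ℝ) : ℂ) * Complex.I) * Z1 := by
    push_cast
    linear_combination hlap - (ω : ℂ) ^ 2 * Z2 * Complex.I_sq
  have h3 := congrArg Complex.normSq h2
  rw [map_mul, map_mul, Complex.normSq_add_mul_I, Complex.normSq_add_mul_I,
    Complex.normSq_eq_norm_sq, Complex.normSq_eq_norm_sq] at h3
  have hp : 0 < ‖Z1‖ := norm_pos_iff.mpr hL
  rw [norm_div, div_lt_one hp]
  by_contra hcon
  push Not at hcon
  have hsq : ‖Z1‖ ^ 2 ≤ ‖Z2‖ ^ 2 := by gcongr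
  have hpos : 0 < ω ^ 2 * (ω ^ 2 - (2 * K - (A ^ 2 - B ^ 2))) :=
    mul_pos (by positivity) (by linarith)
  have h4 := mul_le_mul_of_nonneg_left hsq
    (by positivity : 0 ≤ (K - ω ^ 2) ^ 2 + (A * ω) ^ 2)
  have h5 := mul_pos hpos (pow_pos hp 2)
  nlinarith
end

section
/- Let m, c, k, h, ω be positive reals with 0 < m²·ω⁴ + ((2c + k·h)² − c² − 4k·m)·ω² + 3k², set s = iω, and let z₁, z₂ : ℝ → ℂ. Assume: z₁ and z₂ are twice differentiable with continuous first and second derivatives on [0,∞); z₁, z₁', z₂, z₂', z₂'' are all of exponential order a for some real a with a < 0; z₁(0) = 0, z₂(0) = 0 and z₂'(0) = 0; the differential equation z₂''(t) + ((2c + k·h)/m)·z₂'(t) + (2k/m)·z₂(t) = (c/m)·z₁'(t) + (k/m)·z₁(t) holds for all t ≥ 0; and L[z₁](s) ≠ 0. Then ‖L[z₂](s) / L[z₁](s)‖ < 1, i.e., the platoon with autonomous bidirectional variable-spacing controller is stable at frequency ω. -/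
open MeasureTheory

lemma aux_norm (ω t : ℝ) : ‖Complex.exp (-(Complex.I * (ω : ℂ) * (t : ℂ)))‖ = 1 := by
  rw [Complex.norm_exp]; simp

lemma aux_int (ω a : ℝ) (ha : a < 0) (f : ℝ → ℂ) (hf : ContinuousOn f (Set.Ici 0))
    (he : ExpOrder f a) :
    IntegrableOn (fun t : ℝ => Complex.exp (-(Complex.I * (ω : ℂ) * (t : ℂ))) * f t)
      (Set.Ioi 0) := by
  obtain ⟨M, hM, hb⟩ := he
  have hg : IntegrableOn (fun t : ℝ => M * Real.exp (a * t)) (Set.Ioi 0) :=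
    (integrableOn_exp_mul_Ioi ha 0).const_mul M
  refine Integrable.mono' hg ?_ ?_
  · refine ContinuousOn.aestronglyMeasurable ?_ measurableSet_Ioi
    refine ContinuousOn.mul (Continuous.continuousOn (by fun_prop))
      (hf.mono Set.Ioi_subset_Ici_self)
  · refine (ae_restrict_iff' measurableSet_Ioi).2 (Filter.Eventually.of_forall ?_)
    intro t ht
    rw [norm_mul, aux_norm, one_mul]
    exact hb t (le_of_lt ht)

lemma aux_deriv (ω a : ℝ) (ha : a < 0) (f f' : ℝ → ℂ)
    (hd : ∀ t ∈ Set.Ici (0 : ℝ), HasDerivWithinAt f (f' t) (Set.Ici 0) t)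
    (hf' : ContinuousOn f' (Set.Ici 0)) (he : ExpOrder f a) (he' : ExpOrder f' a)
    (h0 : f 0 = 0) :
    laplace f' (Complex.I * ω) = (Complex.I * ω) * laplace f (Complex.I * ω) := by
  have hf : ContinuousOn f (Set.Ici 0) := fun t ht => (hd t ht).continuousWithinAt
  have i1 := aux_int ω a ha f hf he
  have i2 := aux_int ω a ha f' hf' he'
  set s : ℂ := Complex.I * ω with hs
  have hlim : Filter.Tendsto (fun t : ℝ => Complex.exp (-(s * (t : ℂ))) * f t)
      Filter.atTop (nhds 0) := by
    obtain ⟨M, hM, hb⟩ := he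
    have hg : Filter.Tendsto (fun t : ℝ => M * Real.exp (a * t)) Filter.atTop (nhds 0) := by
      have : Filter.Tendsto (fun t : ℝ => Real.exp (a * t)) Filter.atTop (nhds 0) :=
        Real.tendsto_exp_atBot.comp (Filter.tendsto_id.const_mul_atTop_of_neg ha)
      simpa using this.const_mul M
    refine squeeze_zero_norm' ?_ hg
    filter_upwards [Filter.eventually_ge_atTop (0 : ℝ)] with t ht
    rw [norm_mul, hs, aux_norm, one_mul]
    exact hb t ht
  have key := integral_Ioi_of_hasDerivAt_of_tendsto (a := (0 : ℝ))
    (f := fun t : ℝ => Complex.exp (-(s * (t : ℂ))) * f t)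
    (f' := fun t : ℝ => Complex.exp (-(s * (t : ℂ))) * f' t
      - s * (Complex.exp (-(s * (t : ℂ))) * f t)) (m := 0) ?_ ?_ (i2.sub (i1.const_mul s)) hlim
  · rw [integral_sub i2 (i1.const_mul s), integral_const_mul] at key
    simp only [h0, mul_zero, sub_zero] at key
    exact sub_eq_zero.1 key
  · exact ContinuousWithinAt.mul (Continuous.continuousWithinAt (by fun_prop))
      (hf 0 Set.self_mem_Ici)
  · intro t ht
    have h1 : HasDerivAt f (f' t) t := (hd t (Set.mem_Ici.2 (le_of_lt (Set.mem_Ioi.1 ht)))).hasDerivAt (Ici_mem_nhds ht)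
    have h2 : HasDerivAt (fun t : ℝ => -(s * (t : ℂ))) (-(s * 1)) t :=
      ((hasDerivAt_id t).ofReal_comp.const_mul s).neg
    refine (h2.cexp.mul h1).congr_deriv ?_
    ring

theorem stmt13 (m c k h ω : ℝ) (hm : 0 < m) (hc : 0 < c) (hk : 0 < k) (hh : 0 < h) (hω : 0 < ω)
    (hfreq : 0 < m ^ 2 * ω ^ 4 + ((2 * c + k * h) ^ 2 - c ^ 2 - 4 * k * m) * ω ^ 2 + 3 * k ^ 2)
    (s : ℂ) (hs : s = Complex.I * (ω : ℂ)) (a : ℝ) (ha : a < 0)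
    (z₁ z₂ z₁' z₁'' z₂' z₂'' : ℝ → ℂ)
    (hdz₁ : ∀ t ∈ Set.Ici (0 : ℝ), HasDerivWithinAt z₁ (z₁' t) (Set.Ici 0) t)
    (hdz₁' : ∀ t ∈ Set.Ici (0 : ℝ), HasDerivWithinAt z₁' (z₁'' t) (Set.Ici 0) t)
    (hdz₂ : ∀ t ∈ Set.Ici (0 : ℝ), HasDerivWithinAt z₂ (z₂' t) (Set.Ici 0) t)
    (hdz₂' : ∀ t ∈ Set.Ici (0 : ℝ), HasDerivWithinAt z₂' (z₂'' t) (Set.Ici 0) t)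
    (hcz₁' : ContinuousOn z₁' (Set.Ici 0)) (hcz₁'' : ContinuousOn z₁'' (Set.Ici 0))
    (hcz₂' : ContinuousOn z₂' (Set.Ici 0)) (hcz₂'' : ContinuousOn z₂'' (Set.Ici 0))
    (hez₁ : ExpOrder z₁ a) (hez₁' : ExpOrder z₁' a)
    (hez₂ : ExpOrder z₂ a) (hez₂' : ExpOrder z₂' a) (hez₂'' : ExpOrder z₂'' a)
    (hinit₁ : z₁ 0 = 0) (hinit₂ : z₂ 0 = 0) (hinit₂' : z₂' 0 = 0)
    (hode : ∀ t ≥ (0 : ℝ),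
      z₂'' t + (((2 * c + k * h) / m : ℝ) : ℂ) * z₂' t + ((2 * k / m : ℝ) : ℂ) * z₂ t
        = ((c / m : ℝ) : ℂ) * z₁' t + ((k / m : ℝ) : ℂ) * z₁ t)
    (hL : laplace z₁ s ≠ 0) :
    ‖laplace z₂ s / laplace z₁ s‖ < 1 := by
  subst hs
  have c1 : ContinuousOn z₁ (Set.Ici 0) := fun t ht => (hdz₁ t ht).continuousWithinAt
  have c2 : ContinuousOn z₂ (Set.Ici 0) := fun t ht => (hdz₂ t ht).continuousWithinAt
  have e1 := aux_deriv ω a ha z₁ z₁' hdz₁ hcz₁' hez₁ hez₁' hinit₁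
  have e2 := aux_deriv ω a ha z₂ z₂' hdz₂ hcz₂' hez₂ hez₂' hinit₂
  have e3 := aux_deriv ω a ha z₂' z₂'' hdz₂' hcz₂'' hez₂' hez₂'' hinit₂'
  have i1 := aux_int ω a ha z₁ c1 hez₁
  have i1' := aux_int ω a ha z₁' hcz₁' hez₁'
  have i2 := aux_int ω a ha z₂ c2 hez₂
  have i2' := aux_int ω a ha z₂' hcz₂' hez₂'
  have i2'' := aux_int ω a ha z₂'' hcz₂'' hez₂''
  have hLode : laplace z₂'' (Complex.I * ω)
      + (((2 * c + k * h) / m : ℝ) : ℂ) * laplace z₂' (Complex.I * ω)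
      + ((2 * k / m : ℝ) : ℂ) * laplace z₂ (Complex.I * ω)
      = ((c / m : ℝ) : ℂ) * laplace z₁' (Complex.I * ω)
        + ((k / m : ℝ) : ℂ) * laplace z₁ (Complex.I * ω) := by
    unfold laplace
    simp only [← integral_const_mul]
    rw [← integral_add i2'' (i2'.const_mul _), ← integral_add (i1'.const_mul _) (i1.const_mul _)]
    refine (integral_add (i2''.add (i2'.const_mul _)) (i2.const_mul _)).symm.trans ?_
    refine setIntegral_congr_fun measurableSet_Ioi ?_
    intro t ht
    have := hode t (le_of_lt ht)
    simp only [Pi.add_apply]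
    linear_combination Complex.exp (-(Complex.I * (ω : ℂ) * (t : ℂ))) * this
  rw [e3, e2, e1] at hLode
  generalize laplace z₁ (Complex.I * ω) = Z₁ at *
  generalize laplace z₂ (Complex.I * ω) = Z₂ at *
  have hm' : (m : ℂ) ≠ 0 := by exact_mod_cast hm.ne'
  have hI := Complex.I_sq
  have main : Z₂ * (((2 * k - m * ω ^ 2 : ℝ) : ℂ) + (((2 * c + k * h) * ω : ℝ) : ℂ) * Complex.I)
      = (((k : ℝ) : ℂ) + ((c * ω : ℝ) : ℂ) * Complex.I) * Z₁ := by
    push_cast at hLode ⊢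
    field_simp at hLode
    linear_combination hLode - (m : ℂ) * ω ^ 2 * Z₂ * hI
  have hn := congrArg Complex.normSq main
  rw [map_mul, map_mul, Complex.normSq_add_mul_I, Complex.normSq_add_mul_I] at hn
  have p1 : 0 < Complex.normSq Z₁ := Complex.normSq_pos.2 hL
  have p2 := Complex.normSq_nonneg Z₂
  have hlt : Complex.normSq Z₂ < Complex.normSq Z₁ := by
    by_contra hcon
    push Not at hcon
    have hN : 0 < k ^ 2 + (c * ω) ^ 2 := by positivity
    have hD : k ^ 2 + (c * ω) ^ 2 < (2 * k - m * ω ^ 2) ^ 2 + ((2 * c + k * h) * ω) ^ 2 := by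
      linarith [hfreq]
    have h1 := mul_le_mul_of_nonneg_left hcon hN.le
    have h2 := mul_lt_mul_of_pos_left hD (p1.trans_le hcon)
    linarith
  rw [norm_div, div_lt_one (norm_pos_iff.2 hL)]
  rw [Complex.normSq_eq_norm_sq, Complex.normSq_eq_norm_sq] at hlt
  exact lt_of_pow_lt_pow_left₀ 2 (norm_nonneg _) hlt
end
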